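/- Let 0<r<1, α>0 and β∈ℝ. Then for every integer n ≥ n₀(α,r,2) one has E_n(C^{α,r}_{β,2})_C = (e^{-α n^r}/√(2παr)) · n^{(1-r)/2} · (1 + γ_n · ( (1/(2αr)) n^{-r} + αr · n^{-(1-r)} )), where the quantity γ_n = γ_n(α,r) satisfies |γ_n| ≤ √(54π³/(54π³−1)). -/

import Mathlib

open MeasureTheory Real Filter
open scoped ENNReal

/-- The generalized Poisson kernel `P_{α,r,β}(t) = Σ_{k=1}^∞ e^{-α k^r} cos(kt − βπ/2)`. -/
noncomputable def genPoissonKernel (α r β : ℝ) (t : ℝ) : ℝ :=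
  ∑' k : ℕ, Real.exp (-α * ((k : ℝ) + 1) ^ r) * Real.cos (((k : ℝ) + 1) * t - β * π / 2)

/-- Fourier cosine coefficient `a_k = (1/π)∫_{-π}^{π} f(t) cos(kt) dt`. -/
noncomputable def fourierCoefA (f : ℝ → ℝ) (k : ℕ) : ℝ :=
  (1 / π) * ∫ t in (-π)..π, f t * Real.cos (k * t)

/-- Fourier sine coefficient `b_k = (1/π)∫_{-π}^{π} f(t) sin(kt) dt`. -/
noncomputable def fourierCoefB (f : ℝ → ℝ) (k : ℕ) : ℝ :=
  (1 / π) * ∫ t in (-π)..π, f t * Real.sin (k * t)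

/-- Partial Fourier sum of order `m` of `f`. -/
noncomputable def fourierSum (m : ℕ) (f : ℝ → ℝ) (x : ℝ) : ℝ :=
  fourierCoefA f 0 / 2 +
    ∑ k ∈ Finset.Icc 1 m, (fourierCoefA f k * Real.cos (k * x) + fourierCoefB f k * Real.sin (k * x))

/-- The class `C^{α,r}_{β,p}` of generalized Poisson integrals. -/
def poissonClass (α r β : ℝ) (p : ℝ≥0∞) : Set (ℝ → ℝ) :=
  {f | (∀ x, f (x + 2 * π) = f x) ∧ ∃ a₀ : ℝ, ∃ φ : ℝ → ℝ,
    (∀ x, φ (x + 2 * π) = φ x) ∧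
    eLpNorm φ p (volume.restrict (Set.Ioc (0 : ℝ) (2 * π))) ≤ 1 ∧
    (∫ t in (0 : ℝ)..(2 * π), φ t) = 0 ∧
    ∀ x, f x = a₀ / 2 + (1 / π) * ∫ t in (-π)..π, genPoissonKernel α r β (x - t) * φ t}

/-- `E_n(C^{α,r}_{β,p})_C`: uniform deviation of Fourier sums of order `n-1` on the class. -/
noncomputable def EnC (α r β : ℝ) (p : ℝ≥0∞) (n : ℕ) : ℝ :=
  ⨆ f ∈ poissonClass α r β p, ⨆ x : ℝ, |f x - fourierSum (n - 1) f x|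

/-- `n₀(α,r,2)`: the smallest positive integer `n` with
`(1/(αr)) n^{-r} + 2αr n^{-(1-r)} ≤ (1/(3π)³)·(1/2)`. -/
noncomputable def n₀two (α r : ℝ) : ℕ :=
  sInf {n : ℕ | 0 < n ∧
    1 / (α * r) * (n : ℝ) ^ (-r) + 2 * α * r * (n : ℝ) ^ (-(1 - r)) ≤
      (1 / (3 * π) ^ 3) * (1 / 2)}

/-!
By Parseval and Cauchy–Schwarz the deviation equals `√(T / π)` with `T = ∑_{k ≥ n} e^{-2αk^r}`,
the extremal `φ` being the reflected tail of the kernel, normalised in `L²`.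
With `F x = e^{-2αx^r} x^{1-r} / (2αr)`, the mean value theorem applied to `F k - F (k + 1)` gives
`F n ≤ T ≤ F n / (1 - u) + e^{-2αn^r}`, `u = n^{-r} / (2αr)`. Since
`e^{-2αn^r} = 2 F n · αr n^{-(1-r)}`, this is the claim with `0 ≤ γ ≤ 1` as soon as `u ≤ 1 / 2`.

One point is specific to the definition of the class: it admits non-measurable `φ`. These
contribute only constants provided the kernel vanishes almost nowhere. For `r < 1` this is not
obvious, as the Fourier coefficients do not decay exponentially, but `k ↦ e^{-α(k+1)^r}` is a moment
sequence on `[0, 1]`. The Cauchy transform of the representing functional on `C[0, 1]` then shows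
that the kernel is real analytic on `(0, 2π)`.
-/

/-! ### Moment sequences on the unit interval -/

/-- The sequence `a` satisfies the moment bound with constant `A`: the functional
`∑ pₖ xᵏ ↦ ∑ pₖ aₖ` on polynomials has norm at most `A` for the supremum norm on `[0, 1]`.
Equivalently, `a` is the moment sequence of a complex measure on `[0, 1]` of total variation at
most `A`; this form makes the stability under limits immediate. -/
def HasMomentBound (A : ℝ) (a : ℕ → ℂ) : Prop :=
  ∀ (S : Finset ℕ) (p : ℕ → ℂ) (B : ℝ),
    (∀ s ∈ Set.Icc (0 : ℝ) 1, ‖∑ k ∈ S, p k * (s : ℂ) ^ k‖ ≤ B) →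
      ‖∑ k ∈ S, p k * a k‖ ≤ A * B

namespace HasMomentBound

variable {A B : ℝ} {a b : ℕ → ℂ}

theorem pow_of_mem_Icc {s : ℝ} (hs : s ∈ Set.Icc (0 : ℝ) 1) :
    HasMomentBound 1 (fun k => (s : ℂ) ^ k) := fun S p B h => by
  simpa using h s hs

theorem zero : HasMomentBound 0 (fun _ => 0) := fun S p B _ => by simp

theorem add (ha : HasMomentBound A a) (hb : HasMomentBound B b) :
    HasMomentBound (A + B) (fun k => a k + b k) := fun S p C hp => by
  simp only [mul_add, Finset.sum_add_distrib, add_mul]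
  exact (norm_add_le _ _).trans (add_le_add (ha S p C hp) (hb S p C hp))

theorem const_mul {c : ℝ} (hc : 0 ≤ c) (ha : HasMomentBound A a) :
    HasMomentBound (c * A) (fun k => (c : ℂ) * a k) := fun S p C hp => by
  have pull_out : ∑ k ∈ S, p k * ((c : ℂ) * a k) = c * ∑ k ∈ S, p k * a k := by
    rw [Finset.mul_sum]
    exact Finset.sum_congr rfl fun k _ => by ring
  rw [pull_out, norm_mul, Complex.norm_of_nonneg hc, mul_assoc]
  exact mul_le_mul_of_nonneg_left (ha S p C hp) hc

theorem mul (ha : HasMomentBound A a) (hb : HasMomentBound B b) :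
    HasMomentBound (A * B) (fun k => a k * b k) := fun S p C hp => by
  have bound_dilated : ∀ s ∈ Set.Icc (0 : ℝ) 1,
      ‖∑ k ∈ S, p k * b k * (s : ℂ) ^ k‖ ≤ B * C := fun s hs => by
    have := hb S (fun k => p k * (s : ℂ) ^ k) C fun s' hs' => by
      simpa [mul_pow, mul_assoc] using
        hp (s * s') ⟨mul_nonneg hs.1 hs'.1, mul_le_one₀ hs.2 hs'.1 hs'.2⟩
    simpa only [mul_right_comm] using this
  simpa only [mul_assoc, mul_comm (b _)] using ha S (fun k => p k * b k) (B * C) bound_dilated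

theorem pow (ha : HasMomentBound A a) (j : ℕ) : HasMomentBound (A ^ j) (fun k => a k ^ j) := by
  induction j with
  | zero => simpa using pow_of_mem_Icc (s := 1) (by simp)
  | succ j ih => simpa only [pow_succ] using ih.mul ha

theorem of_tendsto {ι : Type*} {l : Filter ι} [l.NeBot] {A : ι → ℝ} {A' : ℝ} {a : ι → ℕ → ℂ}
    {a' : ℕ → ℂ} (ha : ∀ i, HasMomentBound (A i) (a i)) (hA : Tendsto A l (nhds A'))
    (h : ∀ k, Tendsto (fun i => a i k) l (nhds (a' k))) : HasMomentBound A' a' :=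
  fun S p C hp => le_of_tendsto_of_tendsto'
    (tendsto_finsetSum S fun k _ => (h k).const_mul (p k)).norm (hA.mul_const C)
    fun i => ha i S p C hp

theorem sum {ι : Type*} (I : Finset ι) {A : ι → ℝ} {a : ι → ℕ → ℂ}
    (ha : ∀ i, HasMomentBound (A i) (a i)) :
    HasMomentBound (∑ i ∈ I, A i) (fun k => ∑ i ∈ I, a i k) := by
  classical
  induction I using Finset.induction_on with
  | empty => simpa using zero
  | insert i I hi ih => simpa only [Finset.sum_insert hi] using (ha i).add ih

theorem hasSum {ι : Type*} {A : ι → ℝ} {A' : ℝ} {a : ι → ℕ → ℂ} {a' : ℕ → ℂ}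
    (ha : ∀ i, HasMomentBound (A i) (a i)) (hA : HasSum A A')
    (h : ∀ k, HasSum (fun i => a i k) (a' k)) : HasMomentBound A' a' :=
  of_tendsto (fun I => sum I ha) hA h

theorem exp (ha : HasMomentBound A a) :
    HasMomentBound (Real.exp A) (fun k => Complex.exp (a k)) := by
  refine hasSum (fun j => (ha.pow j).const_mul (c := (j.factorial : ℝ)⁻¹) (by positivity)) ?_
    fun k => ?_
  · simpa only [Real.exp_eq_exp_ℝ, div_eq_inv_mul] using NormedSpace.expSeries_div_hasSum_exp A
  · simpa only [Complex.exp_eq_exp_ℂ, div_eq_inv_mul, Complex.ofReal_inv, Complex.ofReal_natCast]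
      using NormedSpace.expSeries_div_hasSum_exp (a k)

theorem powerSeries_geometric {c : ℕ → ℝ} (hc : ∀ j, 0 ≤ c j) {g : ℝ → ℝ} {q : ℝ}
    (hq : q ∈ Set.Icc (0 : ℝ) 1)
    (hg : ∀ k : ℕ, HasSum (fun j => c j * (q ^ (k + 1)) ^ j) (g (q ^ (k + 1)))) :
    HasMomentBound (g q) (fun k => (g (q ^ (k + 1)) : ℂ)) := by
  have hmass (j : ℕ) : HasMomentBound (c j * q ^ j)
      (fun k => ((c j * q ^ j : ℝ) : ℂ) * ((q ^ j : ℝ) : ℂ) ^ k) := by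
    simpa only [mul_one] using (pow_of_mem_Icc (s := q ^ j)
      ⟨pow_nonneg hq.1 j, pow_le_one₀ hq.1 hq.2⟩).const_mul (mul_nonneg (hc j) (pow_nonneg hq.1 j))
  refine hasSum hmass (by simpa using hg 0) fun k => ?_
  convert Complex.hasSum_ofReal.2 (hg k) using 2 with j
  push_cast
  ring

end HasMomentBound

theorem multichoose_neg_succ_nonpos {r : ℝ} (hr0 : 0 ≤ r) (hr1 : r < 1) (j : ℕ) :
    Ring.multichoose (-r) (j + 1) ≤ 0 := by
  have hpos : 0 < (ascPochhammer ℝ j).eval (1 - r) := ascPochhammer_pos j _ (by linarith)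
  have hfact := Ring.factorial_nsmul_multichoose_eq_ascPochhammer (-r) (j + 1)
  rw [Polynomial.ascPochhammer_smeval_eq_eval, ascPochhammer_succ_left, Polynomial.eval_mul,
    Polynomial.eval_comp, nsmul_eq_mul] at hfact
  simp only [Polynomial.eval_X, Polynomial.eval_add, Polynomial.eval_one,
    neg_add_eq_sub] at hfact
  have : (0 : ℝ) < (j + 1).factorial := by positivity
  by_contra! hlt
  nlinarith [mul_pos this hlt, mul_nonneg hr0 hpos.le]

theorem hasSum_multichoose_neg_mul_pow (r : ℝ) {x : ℝ} (hx : |x| < 1) :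
    HasSum (fun j : ℕ => Ring.multichoose (-r) j * x ^ j) ((1 - x) ^ r) := by
  have hball : x ∈ Metric.eball (0 : ℝ) 1 := by
    simpa [← Real.norm_eq_abs, enorm_eq_nnnorm, ← NNReal.coe_lt_coe] using hx
  have hbase : 0 ≤ 1 - x := by linarith [le_abs_self x]
  simpa [Ring.multichoose_eq, FormalMultilinearSeries.ofScalars, mul_comm,
    Real.rpow_neg hbase] using
    (Real.one_div_one_sub_rpow_hasFPowerSeriesOnBall_zero (-r)).hasSum hball

theorem exists_nonneg_hasSum_one_sub_one_sub_rpow {r : ℝ} (hr0 : 0 ≤ r) (hr1 : r < 1) :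
    ∃ c : ℕ → ℝ, (∀ j, 0 ≤ c j) ∧
      ∀ x : ℝ, |x| < 1 → HasSum (fun j => c j * x ^ j) (1 - (1 - x) ^ r) := by
  refine ⟨fun j => (if j = 0 then 1 else 0) - Ring.multichoose (-r) j, ?_, fun x hx => ?_⟩
  · rintro (_ | j)
    · simp
    · simpa using multichoose_neg_succ_nonpos hr0 hr1 j
  · refine ((hasSum_ite_eq (0 : ℕ) (1 : ℝ)).sub (hasSum_multichoose_neg_mul_pow r hx)).congr_fun
      fun j => ?_
    split_ifs with hj <;> simp [hj]

section StretchedExponential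

variable {r : ℝ}

theorem hasMomentBound_exp_neg_one_sub_pow_rpow (hr0 : 0 ≤ r) (hr1 : r < 1) {B q : ℝ}
    (hB : 0 ≤ B) (hq0 : 0 ≤ q) (hq1 : q < 1) :
    HasMomentBound (Real.exp (-(B * (1 - q) ^ r)))
      (fun k => (Real.exp (-(B * (1 - q ^ (k + 1)) ^ r)) : ℂ)) := by
  obtain ⟨c, hc, hsum⟩ := exists_nonneg_hasSum_one_sub_one_sub_rpow hr0 hr1
  have hexp := ((HasMomentBound.powerSeries_geometric hc (g := fun x => 1 - (1 - x) ^ r)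
    ⟨hq0, hq1.le⟩ fun k => hsum _ <| by
      rw [abs_of_nonneg (pow_nonneg hq0 _)]
      exact pow_lt_one₀ hq0 hq1 k.succ_ne_zero).const_mul hB).exp.const_mul (Real.exp_nonneg (-B))
  convert hexp using 2
  · rw [← Real.exp_add]
    ring_nf
  · push_cast
    rw [← Complex.exp_add]
    ring_nf

theorem tendsto_mul_one_sub_exp_neg_inv_pow (k : ℕ) :
    Tendsto (fun N : ℕ => (N : ℝ) * (1 - Real.exp (-(N : ℝ)⁻¹) ^ k)) atTop (nhds k) := by
  have hderiv : HasDerivAt (fun h : ℝ => 1 - Real.exp (-h) ^ k) k 0 := by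
    simpa using (((hasDerivAt_neg (0 : ℝ)).exp.pow k).const_sub 1)
  have hinv : Tendsto (fun N : ℕ => (N : ℝ)⁻¹) atTop (nhdsWithin 0 {0}ᶜ) :=
    tendsto_nhdsWithin_iff.2 ⟨tendsto_inv_atTop_nhds_zero_nat, by
      filter_upwards [eventually_gt_atTop 0] with N hN
      simpa using hN.ne'⟩
  simpa [Function.comp_def] using hderiv.tendsto_slope_zero.comp hinv

/-- The Bernstein function `x ↦ x ^ r` is a limit of `x ↦ N ^ r * (1 - exp (-x / N)) ^ r`, and each
`1 - (1 - y) ^ r` is a power series in `y` with nonnegative coefficients. -/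
theorem hasMomentBound_exp_neg_mul_succ_rpow (hr0 : 0 < r) (hr1 : r < 1) {α : ℝ} (hα : 0 ≤ α) :
    HasMomentBound (Real.exp (-α)) (fun k => (Real.exp (-α * ((k : ℝ) + 1) ^ r) : ℂ)) := by
  have approx (N : ℕ) : HasMomentBound _ _ :=
    hasMomentBound_exp_neg_one_sub_pow_rpow hr0.le hr1 (B := α * ((N : ℝ) + 1) ^ r)
      (q := Real.exp (-((N + 1 : ℕ) : ℝ)⁻¹)) (by positivity) (Real.exp_nonneg _)
      (Real.exp_lt_one_iff.2 (neg_neg_of_pos (by positivity)))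
  have hlim (k : ℕ) : Tendsto (fun N : ℕ => Real.exp (-(α * ((N : ℝ) + 1) ^ r *
      (1 - Real.exp (-((N + 1 : ℕ) : ℝ)⁻¹) ^ (k + 1)) ^ r))) atTop
      (nhds (Real.exp (-α * ((k : ℝ) + 1) ^ r))) := by
    have hbase := (tendsto_mul_one_sub_exp_neg_inv_pow (k + 1)).comp (tendsto_add_atTop_nat 1)
    have hlim := (Real.continuous_exp.tendsto _).comp
      ((hbase.rpow_const (Or.inr hr0.le)).const_mul (-α))
    refine (hlim.congr fun N => ?_).trans_eq (by push_cast; rfl)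
    have hpow_le : Real.exp (-((N + 1 : ℕ) : ℝ)⁻¹) ^ (k + 1) ≤ 1 :=
      pow_le_one₀ (Real.exp_nonneg _) (Real.exp_le_one_iff.2 (neg_nonpos.2 (by positivity)))
    simp only [Function.comp_apply]
    rw [Real.mul_rpow (by positivity) (by linarith)]
    push_cast
    ring_nf
  refine HasMomentBound.of_tendsto approx (by simpa using hlim 0) fun k => ?_
  exact (Complex.continuous_ofReal.tendsto _).comp (hlim k)

end StretchedExponential

/-! ### Analytic continuation across the unit circle -/

theorem analyticAt_exp_ofReal_mul_I (t : ℝ) :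
    AnalyticAt ℝ (fun u : ℝ => Complex.exp (u * Complex.I)) t :=
  ((analyticAt_cexp (z := (t * Complex.I : ℂ))).restrictScalars (𝕜 := ℝ)).comp
    (f := fun u : ℝ => (u * Complex.I : ℂ))
    ((Complex.ofRealCLM.analyticAt t).mul analyticAt_const)

theorem exists_strongDual_apply_eq {V E : Type*} [AddCommGroup V] [Module ℂ V]
    [SeminormedAddCommGroup E] [NormedSpace ℂ E] (T : V →ₗ[ℂ] E) (L : V →ₗ[ℂ] ℂ) {C : ℝ}
    (hC : ∀ v, ‖L v‖ ≤ C * ‖T v‖) : ∃ Λ : StrongDual ℂ E, ∀ v, Λ (T v) = L v := by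
  obtain ⟨Λ, hΛ, -⟩ := exists_extension_norm_eq (LinearMap.range T) (L.compLeftInverse T)
  exact ⟨Λ, fun v => (hΛ ⟨T v, v, rfl⟩).trans
    (LinearMap.compLeftInverse_apply_of_bdd L T ⟨C, hC⟩ v _ rfl)⟩

/-- The inclusion `[0, 1] → ℂ`, whose powers are the monomials on `[0, 1]`. -/
def unitIntervalCoe : C(unitInterval, ℂ) := ⟨fun s => ((s : ℝ) : ℂ), by fun_prop⟩

theorem norm_unitIntervalCoe_le_one : ‖unitIntervalCoe‖ ≤ 1 :=
  (ContinuousMap.norm_le _ zero_le_one).2 fun s => by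
    simpa [unitIntervalCoe, abs_of_nonneg s.2.1] using s.2.2

theorem isUnit_one_sub_smul_unitIntervalCoe {z : ℂ} (hz : ‖z‖ = 1) (hz1 : z ≠ 1) :
    IsUnit (1 - z • unitIntervalCoe) := by
  rw [ContinuousMap.isUnit_iff_forall_ne_zero]
  intro s hs
  have hzs : z * ((s : ℝ) : ℂ) = 1 := (sub_eq_zero.1 hs).symm
  have hs1 : (s : ℝ) = 1 := by
    simpa [hz, abs_of_nonneg s.2.1] using congrArg norm hzs
  exact hz1 (by simpa [hs1] using hzs)

theorem HasMomentBound.exists_strongDual {A : ℝ} {a : ℕ → ℂ} (ha : HasMomentBound A a) :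
    ∃ Λ : StrongDual ℂ C(unitInterval, ℂ), ∀ k, Λ (unitIntervalCoe ^ k) = a k := by
  obtain ⟨Λ, hΛ⟩ := exists_strongDual_apply_eq (C := A)
    (Finsupp.linearCombination ℂ fun k => unitIntervalCoe ^ k) (Finsupp.linearCombination ℂ a)
    fun p => by
      refine ha p.support p _ fun s hs => ?_
      simpa [Finsupp.linearCombination_apply, Finsupp.sum, unitIntervalCoe] using
        (Finsupp.linearCombination ℂ (fun k => unitIntervalCoe ^ k) p).norm_coe_le_norm ⟨s, hs⟩
  exact ⟨Λ, fun k => by simpa using hΛ (Finsupp.single k 1)⟩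

section Resolvent

variable (Λ : StrongDual ℂ C(unitInterval, ℂ))

theorem hasSum_apply_pow_unitIntervalCoe_mul_pow {z : ℂ} (hz : ‖z‖ < 1) :
    HasSum (fun k => Λ (unitIntervalCoe ^ k) * z ^ k)
      (Λ (Ring.inverse (1 - z • unitIntervalCoe))) := by
  have hsmall : ‖z • unitIntervalCoe‖ < 1 := by
    rw [norm_smul]
    exact mul_lt_one_of_nonneg_of_lt_one_left (norm_nonneg z) hz norm_unitIntervalCoe_le_one
  have hgeom : HasSum (fun k : ℕ => (z • unitIntervalCoe) ^ k)
      (Ring.inverse (1 - z • unitIntervalCoe)) := by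
    rw [NormedRing.inverse_one_sub _ hsmall]
    exact (summable_geometric_of_norm_lt_one hsmall).hasSum
  simpa [smul_pow, mul_comm, Function.comp_def] using Λ.hasSum hgeom

theorem tsum_apply_pow_unitIntervalCoe_mul_pow
    (hΛ : Summable fun k => ‖Λ (unitIntervalCoe ^ k)‖) {z : ℂ} (hz : ‖z‖ = 1) (hz1 : z ≠ 1) :
    ∑' k, Λ (unitIntervalCoe ^ k) * z ^ k = Λ (Ring.inverse (1 - z • unitIntervalCoe)) := by
  have hterms : Summable fun k => Λ (unitIntervalCoe ^ k) * z ^ k :=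
    Summable.of_norm (by simpa [hz] using hΛ)
  have habel := Complex.tendsto_tsum_powerSeries_nhdsWithin_lt hterms.hasSum.tendsto_sum_nat
  have hcont : ContinuousAt (fun ρ : ℝ => Λ (Ring.inverse (1 - (z * ρ) • unitIntervalCoe))) 1 := by
    obtain ⟨u, hu⟩ := isUnit_one_sub_smul_unitIntervalCoe hz hz1
    refine Λ.continuous.continuousAt.comp (ContinuousAt.comp (g := Ring.inverse) ?_ (by fun_prop))
    rw [Complex.ofReal_one, mul_one, ← hu]
    exact NormedRing.inverse_continuousAt u
  have hlim := hcont.tendsto.mono_left (nhdsWithin_le_nhds (s := Set.Iio 1))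
  rw [Complex.ofReal_one, mul_one] at hlim
  refine tendsto_nhds_unique (tendsto_map'_iff.1 habel) (hlim.congr' ?_)
  filter_upwards [Ioo_mem_nhdsLT zero_lt_one] with ρ hρ
  have hinside : ‖z * (ρ : ℂ)‖ < 1 := by
    simpa [hz, abs_of_pos hρ.1] using hρ.2
  simpa [mul_pow, mul_assoc] using
    (hasSum_apply_pow_unitIntervalCoe_mul_pow Λ hinside).tsum_eq.symm

theorem analyticAt_apply_inverse_one_sub_exp_smul {t : ℝ} (ht : Complex.exp (t * Complex.I) ≠ 1) :
    AnalyticAt ℝ (fun u : ℝ =>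
      Λ (Ring.inverse (1 - Complex.exp (u * Complex.I) • unitIntervalCoe))) t := by
  have hresolvent : AnalyticAt ℝ (Ring.inverse : C(unitInterval, ℂ) → C(unitInterval, ℂ))
      (1 - Complex.exp (t * Complex.I) • unitIntervalCoe) := by
    obtain ⟨u, hu⟩ := isUnit_one_sub_smul_unitIntervalCoe (Complex.norm_exp_ofReal_mul_I t) ht
    rw [← hu]
    exact analyticAt_inverse u
  exact ((Λ.restrictScalars ℝ).analyticAt _).comp (hresolvent.comp
    (f := fun u : ℝ => 1 - Complex.exp (u * Complex.I) • unitIntervalCoe)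
    (analyticAt_const.sub ((analyticAt_exp_ofReal_mul_I t).smul analyticAt_const)))

end Resolvent

/-- The continuation is the Cauchy transform of the representing functional. -/
theorem HasMomentBound.analyticAt_tsum_mul_exp_pow {A : ℝ} {a : ℕ → ℂ} (ha : HasMomentBound A a)
    (hsum : Summable fun k => ‖a k‖) {t : ℝ} (ht : Complex.exp (t * Complex.I) ≠ 1) :
    AnalyticAt ℝ (fun u : ℝ => ∑' k, a k * Complex.exp (u * Complex.I) ^ k) t := by
  obtain ⟨Λ, hΛ⟩ := ha.exists_strongDual
  obtain rfl : (fun k => Λ (unitIntervalCoe ^ k)) = a := funext hΛ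
  refine (analyticAt_apply_inverse_one_sub_exp_smul Λ ht).congr ?_
  have hne : ∀ᶠ u : ℝ in nhds t, Complex.exp (u * Complex.I) ≠ 1 :=
    ContinuousAt.eventually_ne (by fun_prop) ht
  filter_upwards [hne] with u hu
  exact (tsum_apply_pow_unitIntervalCoe_mul_pow Λ hsum (Complex.norm_exp_ofReal_mul_I u) hu).symm

/-! ### Trigonometric series -/

/-- The trigonometric monomial `Re (w * exp (-iθ))`; at `θ = k t` it is the `k`-th term of a real
Fourier series with cosine coefficient `w.re` and sine coefficient `w.im`. -/
noncomputable def trigHarmonic (w : ℂ) (θ : ℝ) : ℝ := w.re * Real.cos θ + w.im * Real.sin θ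

theorem trigHarmonic_eq_re (w : ℂ) (θ : ℝ) :
    trigHarmonic w θ = (w * Complex.exp ((-θ : ℝ) * Complex.I)).re := by
  rw [Complex.mul_re, Complex.exp_ofReal_mul_I_re, Complex.exp_ofReal_mul_I_im, Real.cos_neg,
    Real.sin_neg, trigHarmonic]
  ring

theorem abs_trigHarmonic_le (w : ℂ) (θ : ℝ) : |trigHarmonic w θ| ≤ ‖w‖ := by
  rw [trigHarmonic_eq_re]
  refine (Complex.abs_re_le_norm _).trans_eq ?_
  rw [norm_mul, Complex.norm_exp_ofReal_mul_I, mul_one]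

@[fun_prop]
theorem continuous_trigHarmonic (w : ℂ) : Continuous (trigHarmonic w) := by
  unfold trigHarmonic
  fun_prop

theorem trigHarmonic_mul_trigHarmonic (w v : ℂ) (x y : ℝ) :
    trigHarmonic w x * trigHarmonic v y =
      (trigHarmonic (w * v) (x + y) + trigHarmonic (w * starRingEnd ℂ v) (x - y)) / 2 := by
  simp only [trigHarmonic, Complex.mul_re, Complex.mul_im, Complex.conj_re, Complex.conj_im,
    Real.cos_add, Real.sin_add, Real.cos_sub, Real.sin_sub]
  ring

theorem integral_trigHarmonic_int_mul (w : ℂ) (m : ℤ) :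
    ∫ t in (-π)..π, trigHarmonic w (m * t) = if m = 0 then 2 * π * w.re else 0 := by
  split_ifs with hm
  · simp [hm, trigHarmonic, two_mul]
  · have hm' : (m : ℝ) ≠ 0 := Int.cast_ne_zero.2 hm
    simp only [trigHarmonic]
    rw [intervalIntegral.integral_add (Continuous.intervalIntegrable (by fun_prop) _ _)
      (Continuous.intervalIntegrable (by fun_prop) _ _)]
    simp [intervalIntegral.integral_comp_mul_left _ hm']

theorem integral_trigHarmonic_mul_trigHarmonic (w v : ℂ) (k j : ℕ) :
    ∫ t in (-π)..π, trigHarmonic w (k * t) * trigHarmonic v (j * t) =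
      if k = j then if k = 0 then 2 * π * w.re * v.re else π * (w * starRingEnd ℂ v).re else 0 := by
  have hprod (t : ℝ) : trigHarmonic w (k * t) * trigHarmonic v (j * t) =
      (trigHarmonic (w * v) ((k + j : ℤ) * t) +
        trigHarmonic (w * starRingEnd ℂ v) ((k - j : ℤ) * t)) / 2 := by
    rw [trigHarmonic_mul_trigHarmonic]
    push_cast
    ring_nf
  simp only [hprod]
  rw [intervalIntegral.integral_div, intervalIntegral.integral_add
    (Continuous.intervalIntegrable (by fun_prop) _ _)
    (Continuous.intervalIntegrable (by fun_prop) _ _), integral_trigHarmonic_int_mul,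
    integral_trigHarmonic_int_mul]
  rcases eq_or_ne k j with rfl | hkj
  · rcases eq_or_ne k 0 with rfl | hk
    · simp
      ring
    · simp [hk, mul_assoc]
  · have hdiff : (k - j : ℤ) ≠ 0 := by omega
    have hsum : (k + j : ℤ) ≠ 0 := by omega
    simp [hkj, hdiff, hsum]

/-- The trigonometric series with complex coefficients `c`: its cosine and sine coefficients are
the real and imaginary parts of `c`. -/
noncomputable def trigSeries (c : ℕ → ℂ) (t : ℝ) : ℝ := ∑' k : ℕ, trigHarmonic (c k) (k * t)

section TrigSeries

variable {c : ℕ → ℂ}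

theorem hasSum_trigSeries (hc : Summable c) (t : ℝ) :
    HasSum (fun k : ℕ => trigHarmonic (c k) (k * t)) (trigSeries c t) :=
  (Summable.of_norm_bounded hc.norm fun k => abs_trigHarmonic_le (c k) (k * t)).hasSum

theorem continuous_trigSeries (hc : Summable c) : Continuous (trigSeries c) :=
  continuous_tsum (fun k => by fun_prop) hc.norm fun k t => abs_trigHarmonic_le (c k) (k * t)

theorem periodic_trigSeries (c : ℕ → ℂ) : Function.Periodic (trigSeries c) (2 * π) := fun t => by
  simp only [trigSeries, trigHarmonic, mul_add, Real.cos_add_nat_mul_two_pi,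
    Real.sin_add_nat_mul_two_pi]

theorem trigSeries_add {d : ℕ → ℂ} (hc : Summable c) (hd : Summable d) (t : ℝ) :
    trigSeries (c + d) t = trigSeries c t + trigSeries d t := by
  refine (((hasSum_trigSeries hc t).add (hasSum_trigSeries hd t)).congr_fun fun k => ?_).tsum_eq
  simp only [trigHarmonic, Pi.add_apply, Complex.add_re, Complex.add_im]
  ring

theorem trigSeries_single_zero (A : ℝ) (t : ℝ) : trigSeries (Pi.single 0 (A : ℂ)) t = A := by
  rw [trigSeries, tsum_eq_single 0 fun k hk => by simp [trigHarmonic, hk]]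
  simp [trigHarmonic]

theorem trigSeries_sub_sum_range (hc : Summable c) (n : ℕ) (t : ℝ) :
    trigSeries c t - ∑ k ∈ Finset.range n, trigHarmonic (c k) (k * t) =
      trigSeries ((Set.Ici n).indicator c) t := by
  have hhead : HasSum (fun k => if k < n then trigHarmonic (c k) (k * t) else 0)
      (∑ k ∈ Finset.range n, trigHarmonic (c k) (k * t)) := by
    rw [← Finset.sum_congr rfl fun k hk => if_pos (Finset.mem_range.1 hk)]
    exact hasSum_sum_of_ne_finset_zero fun k hk => if_neg (by simpa using hk)
  refine (((hasSum_trigSeries hc t).sub hhead).congr_fun fun k => ?_).tsum_eq.symm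
  by_cases hk : k < n
  · simp [hk, trigHarmonic]
  · simp [hk, not_lt.1 hk]

theorem hasSum_integral_trigHarmonic_comp_mul (hc : Summable c) {g : ℝ → ℝ} (hg : Continuous g)
    {φ : ℝ → ℝ} {a b : ℝ} (hφ : IntervalIntegrable φ volume a b) :
    HasSum (fun k : ℕ => ∫ t in a..b, trigHarmonic (c k) (k * g t) * φ t)
      (∫ t in a..b, trigSeries c (g t) * φ t) := by
  refine intervalIntegral.hasSum_integral_of_dominated_convergence (fun k t => ‖c k‖ * |φ t|)
    (fun k => ?_) (fun k => .of_forall fun t _ => ?_) (.of_forall fun t _ => hc.norm.mul_right _) ?_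
    (.of_forall fun t _ => (hasSum_trigSeries hc (g t)).mul_right _)
  · exact (Continuous.aestronglyMeasurable (by fun_prop)).mul hφ.def'.aestronglyMeasurable
  · rw [norm_mul]
    exact mul_le_mul_of_nonneg_right (abs_trigHarmonic_le _ _) (norm_nonneg _)
  · simpa only [tsum_mul_right] using hφ.abs.const_mul _

theorem integral_trigSeries_mul_trigHarmonic (hc : Summable c) (v : ℂ) (j : ℕ) :
    ∫ t in (-π)..π, trigSeries c t * trigHarmonic v (j * t) =
      if j = 0 then 2 * π * (c 0).re * v.re else π * (c j * starRingEnd ℂ v).re := by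
  have hterms := hasSum_integral_trigHarmonic_comp_mul hc continuous_id
    (φ := fun t => trigHarmonic v (j * t)) (a := -π) (b := π)
    (Continuous.intervalIntegrable (by fun_prop) _ _)
  simp only [id_eq, integral_trigHarmonic_mul_trigHarmonic] at hterms
  rw [← hterms.tsum_eq, tsum_eq_single j fun k hk => if_neg hk, if_pos rfl]
  split_ifs with hj <;> simp [hj]

theorem eq_zero_of_trigSeries_eq_zero (hc : Summable c) (h : ∀ t, trigSeries c t = 0) {k : ℕ}
    (hk : k ≠ 0) : c k = 0 := by
  simpa [h, hk, Complex.mul_conj, -Complex.mul_re] using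
    integral_trigSeries_mul_trigHarmonic hc (c k) k

theorem integral_trigSeries_sq (hc : Summable c) (hc0 : c 0 = 0) :
    ∫ t in (-π)..π, trigSeries c t ^ 2 = π * ∑' k, ‖c k‖ ^ 2 := by
  have hterms := hasSum_integral_trigHarmonic_comp_mul hc continuous_id
    (φ := trigSeries c) (a := -π) (b := π) ((continuous_trigSeries hc).intervalIntegrable _ _)
  simp only [id_eq] at hterms
  simp only [pow_two (trigSeries c _)]
  rw [← hterms.tsum_eq, ← tsum_mul_left]
  refine tsum_congr fun k => ?_
  simp only [mul_comm (trigHarmonic (c k) _)]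
  rw [integral_trigSeries_mul_trigHarmonic hc, Complex.mul_conj, Complex.ofReal_re,
    Complex.normSq_eq_norm_sq]
  split_ifs with hk <;> simp [hk, hc0]

theorem integral_trigSeries (hc : Summable c) (hc0 : c 0 = 0) :
    ∫ t in (-π)..π, trigSeries c t = 0 := by
  simpa [trigHarmonic, hc0] using integral_trigSeries_mul_trigHarmonic hc 1 0

theorem fourierCoefA_trigSeries_zero (hc : Summable c) :
    fourierCoefA (trigSeries c) 0 / 2 = (c 0).re := by
  have := integral_trigSeries_mul_trigHarmonic hc 1 0
  simp only [trigHarmonic, Complex.one_re, Complex.one_im, one_mul, zero_mul, add_zero, if_true,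
    mul_one] at this
  rw [fourierCoefA, this]
  field_simp [Real.pi_ne_zero]

theorem fourierCoefA_trigSeries (hc : Summable c) {j : ℕ} (hj : j ≠ 0) :
    fourierCoefA (trigSeries c) j = (c j).re := by
  have := integral_trigSeries_mul_trigHarmonic hc 1 j
  simp only [trigHarmonic, Complex.one_re, Complex.one_im, one_mul, zero_mul, add_zero, hj,
    if_false, map_one, mul_one] at this
  rw [fourierCoefA, this]
  field_simp [Real.pi_ne_zero]

theorem fourierCoefB_trigSeries (hc : Summable c) {j : ℕ} (hj : j ≠ 0) :
    fourierCoefB (trigSeries c) j = (c j).im := by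
  have := integral_trigSeries_mul_trigHarmonic hc Complex.I j
  simp only [trigHarmonic, Complex.I_re, Complex.I_im, one_mul, zero_mul, zero_add, hj,
    if_false, Complex.conj_I] at this
  rw [fourierCoefB, this]
  simp

theorem fourierSum_trigSeries (hc : Summable c) {n : ℕ} (hn : n ≠ 0) (x : ℝ) :
    fourierSum (n - 1) (trigSeries c) x =
      ∑ k ∈ Finset.range n, trigHarmonic (c k) (k * x) := by
  have hIcc : Finset.Icc 1 (n - 1) = Finset.Ico 1 n := by
    ext k
    simp only [Finset.mem_Icc, Finset.mem_Ico]
    omega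
  rw [fourierSum, fourierCoefA_trigSeries_zero hc, hIcc, Finset.range_eq_Ico,
    Finset.sum_eq_sum_Ico_succ_bot (Nat.pos_of_ne_zero hn)]
  congr 1
  · simp [trigHarmonic]
  · refine Finset.sum_congr rfl fun k hk => ?_
    have hk0 : k ≠ 0 := (Nat.lt_of_succ_le (Finset.mem_Ico.1 hk).1).ne'
    rw [fourierCoefA_trigSeries hc hk0, fourierCoefB_trigSeries hc hk0, trigHarmonic]

end TrigSeries

/-- The Fourier coefficients of `f` in the complex form `aₖ + i bₖ` matching `trigSeries`. -/
noncomputable def fourierCoefC (f : ℝ → ℝ) (k : ℕ) : ℂ := ⟨fourierCoefA f k, fourierCoefB f k⟩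

section Convolution

variable {φ : ℝ → ℝ}

theorem integral_trigHarmonic_sub_mul (hφ : IntervalIntegrable φ volume (-π) π) (w : ℂ) (k : ℕ)
    (x : ℝ) :
    (1 / π) * ∫ t in (-π)..π, trigHarmonic w (k * (x - t)) * φ t =
      trigHarmonic (w * fourierCoefC φ k) (k * x) := by
  have hexpand (t : ℝ) : trigHarmonic w (k * (x - t)) * φ t =
      trigHarmonic w (k * x) * (φ t * Real.cos (k * t)) +
        (w.re * Real.sin (k * x) - w.im * Real.cos (k * x)) * (φ t * Real.sin (k * t)) := by
    rw [trigHarmonic, trigHarmonic, mul_sub, Real.cos_sub, Real.sin_sub]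
    ring
  have hcos : IntervalIntegrable (fun t => φ t * Real.cos (k * t)) volume (-π) π :=
    hφ.mul_continuousOn (by fun_prop)
  have hsin : IntervalIntegrable (fun t => φ t * Real.sin (k * t)) volume (-π) π :=
    hφ.mul_continuousOn (by fun_prop)
  simp only [hexpand]
  rw [intervalIntegral.integral_add (hcos.const_mul _) (hsin.const_mul _),
    intervalIntegral.integral_const_mul, intervalIntegral.integral_const_mul]
  simp only [trigHarmonic, fourierCoefC, fourierCoefA, fourierCoefB, Complex.mul_re,
    Complex.mul_im]
  ring

theorem norm_fourierCoefC_le (hφ : IntervalIntegrable φ volume (-π) π) (k : ℕ) :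
    ‖fourierCoefC φ k‖ ≤ 2 / π * ∫ t in (-π)..π, |φ t| := by
  have hle : -π ≤ π := by linarith [Real.pi_pos]
  have bound (g : ℝ → ℝ) (hg : ∀ t, |g t| ≤ 1) :
      |(1 / π) * ∫ t in (-π)..π, φ t * g t| ≤ 1 / π * ∫ t in (-π)..π, |φ t| := by
    rw [abs_mul, abs_of_pos (by positivity)]
    gcongr
    refine intervalIntegral.norm_integral_le_of_norm_le (f := fun t => φ t * g t) hle
      (.of_forall fun t _ => ?_) hφ.abs
    rw [norm_mul]
    exact mul_le_of_le_one_right (norm_nonneg _) (hg t)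
  refine (Complex.norm_le_abs_re_add_abs_im _).trans ?_
  calc |fourierCoefA φ k| + |fourierCoefB φ k|
      ≤ 1 / π * (∫ t in (-π)..π, |φ t|) + 1 / π * ∫ t in (-π)..π, |φ t| :=
        add_le_add (bound _ fun t => Real.abs_cos_le_one _) (bound _ fun t => Real.abs_sin_le_one _)
    _ = 2 / π * ∫ t in (-π)..π, |φ t| := by ring

theorem summable_mul_fourierCoefC {c : ℕ → ℂ} (hc : Summable c)
    (hφ : IntervalIntegrable φ volume (-π) π) : Summable fun k => c k * fourierCoefC φ k :=
  Summable.of_norm_bounded (hc.norm.mul_right _) fun k => by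
    rw [norm_mul]
    exact mul_le_mul_of_nonneg_left (norm_fourierCoefC_le hφ k) (norm_nonneg _)

theorem integral_trigSeries_sub_mul {c : ℕ → ℂ} (hc : Summable c)
    (hφ : IntervalIntegrable φ volume (-π) π) (x : ℝ) :
    (1 / π) * ∫ t in (-π)..π, trigSeries c (x - t) * φ t =
      trigSeries (fun k => c k * fourierCoefC φ k) x := by
  have hterms := (hasSum_integral_trigHarmonic_comp_mul hc (continuous_sub_left x) hφ).mul_left
    (1 / π)
  simp only [integral_trigHarmonic_sub_mul hφ] at hterms
  exact hterms.tsum_eq.symm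

end Convolution

/-! ### Convolution with an `L²` function -/

section PeriodicFunctions

variable {T : ℝ} {f : ℝ → ℝ}

theorem exists_mem_Ioo_ne_zero_of_periodic (hT : 0 < T) (hf : Function.Periodic f T)
    (hcont : Continuous f) (hne : ∃ t, f t ≠ 0) : ∃ t ∈ Set.Ioo 0 T, f t ≠ 0 := by
  by_contra! hzero
  obtain ⟨t, ht⟩ := hne
  obtain ⟨s, hs, hts⟩ := hf.exists_mem_Ico₀ hT t
  have hIcc : Set.EqOn f 0 (Set.Icc 0 T) := by
    rw [← closure_Ioo hT.ne]
    exact Set.EqOn.closure hzero hcont continuous_const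
  exact ht (hts.trans (hIcc (Set.Ico_subset_Icc_self hs)))

theorem ae_ne_zero_of_periodic_of_analyticOnNhd (hT : 0 < T) (hf : Function.Periodic f T)
    (hcont : Continuous f) (han : AnalyticOnNhd ℝ f (Set.Ioo 0 T)) (hne : ∃ t, f t ≠ 0) :
    ∀ᵐ t, f t ≠ 0 := by
  obtain ⟨t₀, ht₀, hft₀⟩ := exists_mem_Ioo_ne_zero_of_periodic hT hf hcont hne
  have hcodiscrete := han.preimage_zero_mem_codiscreteWithin hft₀ ht₀ (isConnected_Ioo hT)
  have hIoo : ∀ᵐ t ∂volume.restrict (Set.Ioo 0 T), f t ≠ 0 :=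
    ae_restrict_le_codiscreteWithin measurableSet_Ioo hcodiscrete
  have hIoc : volume ({t | f t = 0} ∩ Set.Ioc 0 (0 + T)) = 0 := by
    rw [zero_add, ← Measure.restrict_apply' measurableSet_Ioc, restrict_Ioo_eq_restrict_Ioc.symm]
    simpa only [ae_iff, ne_eq, not_not] using hIoo
  rw [ae_iff]
  simp only [not_not]
  refine (isAddFundamentalDomain_Ioc hT 0).measure_zero_of_invariant _ (fun g => ?_) hIoc
  ext t
  rw [Set.mem_vadd_set_iff_neg_vadd_mem]
  simp only [Set.mem_ofPred_eq, hf.map_vadd_zmultiples]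

theorem integral_comp_sub_left_of_periodic (hf : Function.Periodic f T) (x a b : ℝ) :
    ∫ t in a..a + T, f (x - t) = ∫ t in b..b + T, f t := by
  rw [intervalIntegral.integral_comp_sub_left, ← hf.intervalIntegral_add_eq (x - (a + T)) b]
  congr 1
  ring

theorem integral_neg_pi_pi_of_periodic (hf : Function.Periodic f (2 * π)) :
    ∫ t in (-π)..π, f t = ∫ t in (0 : ℝ)..(2 * π), f t := by
  have := hf.intervalIntegral_add_eq (-π) 0
  rwa [zero_add, show -π + 2 * π = π by ring] at this

end PeriodicFunctions

section L2

variable {Ω : Type*} [MeasurableSpace Ω] {μ : Measure Ω} {g φ : Ω → ℝ}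

theorem eLpNorm_two_eq_ofReal_sqrt_integral_sq (hg : MemLp g 2 μ) :
    eLpNorm g 2 μ = ENNReal.ofReal √(∫ t, g t ^ 2 ∂μ) := by
  rw [hg.eLpNorm_eq_integral_rpow_norm two_ne_zero ENNReal.ofNat_ne_top, Real.sqrt_eq_rpow]
  simp

theorem abs_integral_mul_le_of_eLpNorm_two_le_one (hg : MemLp g 2 μ)
    (hφ : AEStronglyMeasurable φ μ) (hφ1 : eLpNorm φ 2 μ ≤ 1) :
    |∫ t, g t * φ t ∂μ| ≤ √(∫ t, g t ^ 2 ∂μ) := by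
  have hholder : eLpNorm (g • φ) 1 μ ≤ ENNReal.ofReal √(∫ t, g t ^ 2 ∂μ) :=
    calc eLpNorm (g • φ) 1 μ ≤ eLpNorm g 2 μ * eLpNorm φ 2 μ :=
          eLpNorm_smul_le_mul_eLpNorm hφ hg.1
      _ ≤ eLpNorm g 2 μ := mul_le_of_le_one_right' hφ1
      _ = _ := eLpNorm_two_eq_ofReal_sqrt_integral_sq hg
  rw [← ENNReal.ofReal_le_ofReal_iff (Real.sqrt_nonneg _), ← Real.norm_eq_abs,
    ofReal_norm]
  refine (enorm_integral_le_lintegral_enorm _).trans ?_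
  simpa [eLpNorm_one_eq_lintegral_enorm] using hholder

theorem aestronglyMeasurable_of_mul (hg : AEStronglyMeasurable g μ) (hg0 : ∀ᵐ t ∂μ, g t ≠ 0)
    (hgφ : AEStronglyMeasurable (fun t => g t * φ t) μ) : AEStronglyMeasurable φ μ := by
  refine (hg.aemeasurable.inv.aestronglyMeasurable.mul hgφ).congr ?_
  filter_upwards [hg0] with t ht
  simp [ht]

end L2

section Deviation

variable {c : ℕ → ℂ} {f φ : ℝ → ℝ} {A : ℝ}

theorem sub_fourierSum_of_eq_add_integral (hc : Summable c)
    (hφ : IntervalIntegrable φ volume (-π) π)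
    (hf : ∀ x, f x = A + (1 / π) * ∫ t in (-π)..π, trigSeries c (x - t) * φ t) {n : ℕ}
    (hn : n ≠ 0) (x : ℝ) :
    f x - fourierSum (n - 1) f x =
      (1 / π) * ∫ t in (-π)..π, trigSeries ((Set.Ici n).indicator c) (x - t) * φ t := by
  have hconst : Summable (Pi.single 0 (A : ℂ) : ℕ → ℂ) := (hasSum_pi_single 0 _).summable
  have hconv := summable_mul_fourierCoefC hc hφ
  have hsum : Summable (Pi.single 0 (A : ℂ) + fun k => c k * fourierCoefC φ k) :=
    hconst.add hconv
  obtain rfl : f = trigSeries (Pi.single 0 (A : ℂ) + fun k => c k * fourierCoefC φ k) := by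
    funext y
    rw [hf, integral_trigSeries_sub_mul hc hφ, trigSeries_add hconst hconv,
      trigSeries_single_zero]
  rw [fourierSum_trigSeries hsum hn, trigSeries_sub_sum_range hsum,
    integral_trigSeries_sub_mul (hc.indicator _) hφ]
  congr 1
  ext1 k
  by_cases hk : n ≤ k
  · simp [hk, (Nat.pos_of_ne_zero hn |>.trans_le hk).ne']
  · simp [hk]

theorem abs_integral_trigSeries_sub_mul_le (hc : Summable c)
    (hφper : Function.Periodic φ (2 * π))
    (hφ : AEStronglyMeasurable φ (volume.restrict (Set.Ioc 0 (2 * π))))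
    (hφ1 : eLpNorm φ 2 (volume.restrict (Set.Ioc 0 (2 * π))) ≤ 1) (x : ℝ) :
    |∫ t in (-π)..π, trigSeries c (x - t) * φ t| ≤ √(∫ t in (-π)..π, trigSeries c t ^ 2) := by
  have hcont : Continuous fun t => trigSeries c (x - t) :=
    (continuous_trigSeries hc).comp (continuous_sub_left x)
  have hmem : MemLp (fun t => trigSeries c (x - t)) 2 (volume.restrict (Set.Ioc 0 (2 * π))) :=
    (memLp_two_iff_integrable_sq hcont.aestronglyMeasurable).2
      (Continuous.integrableOn_Ioc (by fun_prop))
  have hnorm : ∫ t in (-π)..π, trigSeries c t ^ 2 =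
      ∫ t in (0 : ℝ)..(2 * π), trigSeries c (x - t) ^ 2 := by
    have hsq : Function.Periodic (fun t => trigSeries c t ^ 2) (2 * π) := fun t => by
      simp only [periodic_trigSeries c t]
    rw [integral_neg_pi_pi_of_periodic hsq]
    simpa using (integral_comp_sub_left_of_periodic hsq x 0 0).symm
  have hprod : Function.Periodic (fun t => trigSeries c (x - t) * φ t) (2 * π) :=
    ((periodic_trigSeries c).const_sub x).mul hφper
  rw [hnorm, integral_neg_pi_pi_of_periodic hprod,
    intervalIntegral.integral_of_le Real.two_pi_pos.le,
    intervalIntegral.integral_of_le Real.two_pi_pos.le]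
  exact abs_integral_mul_le_of_eLpNorm_two_le_one hmem hφ hφ1

theorem exists_integral_trigSeries_neg_mul_eq (hc : Summable c) (hc0 : c 0 = 0) :
    ∃ φ : ℝ → ℝ, Continuous φ ∧ Function.Periodic φ (2 * π) ∧
      eLpNorm φ 2 (volume.restrict (Set.Ioc 0 (2 * π))) ≤ 1 ∧
      ∫ t in (0 : ℝ)..(2 * π), φ t = 0 ∧
      ∫ t in (-π)..π, trigSeries c (-t) * φ t = √(∫ t in (-π)..π, trigSeries c t ^ 2) := by
  have hcont := continuous_trigSeries hc
  set S := ∫ t in (-π)..π, trigSeries c t ^ 2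
  have hS : ∫ t in (-π)..π, trigSeries c (-t) ^ 2 = S := by
    rw [intervalIntegral.integral_comp_neg fun t => trigSeries c t ^ 2, neg_neg]
  have hS0 : 0 ≤ S := intervalIntegral.integral_nonneg (by linarith [Real.pi_pos])
    fun t _ => sq_nonneg _
  have hφcont : Continuous fun t => trigSeries c (-t) / √S := by fun_prop
  have hφper : Function.Periodic (fun t => trigSeries c (-t) / √S) (2 * π) := fun t => by
    simpa using congrArg (· / √S) ((periodic_trigSeries c).const_sub 0 t)
  refine ⟨_, hφcont, hφper, ?_, ?_, ?_⟩
  · have hmem : MemLp (fun t => trigSeries c (-t) / √S) 2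
        (volume.restrict (Set.Ioc 0 (2 * π))) :=
      (memLp_two_iff_integrable_sq hφcont.aestronglyMeasurable).2
        (Continuous.integrableOn_Ioc (by fun_prop))
    have hsq : Function.Periodic (fun t => (trigSeries c (-t) / √S) ^ 2) (2 * π) := fun t => by
      simp only [hφper t]
    rw [eLpNorm_two_eq_ofReal_sqrt_integral_sq hmem,
      ← intervalIntegral.integral_of_le Real.two_pi_pos.le, ← integral_neg_pi_pi_of_periodic hsq,
      ENNReal.ofReal_le_one, Real.sqrt_le_one]
    simp only [div_pow, Real.sq_sqrt hS0]
    rw [intervalIntegral.integral_div, hS]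
    exact div_self_le_one S
  · rw [← integral_neg_pi_pi_of_periodic hφper, intervalIntegral.integral_div,
      intervalIntegral.integral_comp_neg (trigSeries c), neg_neg, integral_trigSeries hc hc0,
      zero_div]
  · simp only [mul_div_assoc', ← pow_two]
    rw [intervalIntegral.integral_div, hS, Real.div_sqrt]

end Deviation

/-! ### The generalized Poisson kernel -/

theorem summable_exp_neg_mul_rpow {A r : ℝ} (hA : 0 < A) (hr0 : 0 < r) :
    Summable fun k : ℕ => Real.exp (-A * (k : ℝ) ^ r) := by
  have hlittleO := (isLittleO_exp_neg_mul_rpow_atTop hA (-2 / r)).comp_tendsto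
    ((tendsto_rpow_atTop hr0).comp tendsto_natCast_atTop_atTop)
  refine summable_of_isBigO_nat (g := fun k : ℕ => (k : ℝ) ^ (-2 : ℝ))
    (Real.summable_nat_rpow.2 (by norm_num)) (hlittleO.isBigO.congr_right fun k => ?_)
  simp only [Function.comp_apply]
  rw [← Real.rpow_mul k.cast_nonneg, mul_div_cancel₀ _ hr0.ne']

theorem exp_mul_I_ne_one_of_mem_Ioo {t : ℝ} (ht : t ∈ Set.Ioo 0 (2 * π)) :
    Complex.exp (t * Complex.I) ≠ 1 := fun h => by
  have hcos : Real.cos t = 1 := by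
    rw [← Complex.exp_ofReal_mul_I_re, h, Complex.one_re]
  have hzero := (Real.cos_eq_one_iff_of_lt_of_lt (by linarith [ht.1, Real.pi_pos]) ht.2).1 hcos
  exact ht.1.ne' hzero

/-- The coefficients of `P_{α,r,β}` as a `trigSeries`: the phase shift `βπ/2` is carried by the
argument of the coefficient. -/
noncomputable def poissonCoeff (α r β : ℝ) (k : ℕ) : ℂ :=
  if k = 0 then 0 else Real.exp (-α * (k : ℝ) ^ r) * Complex.exp ((β * π / 2 : ℝ) * Complex.I)

section Kernel

variable {α r : ℝ} (β : ℝ)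

theorem norm_poissonCoeff {k : ℕ} (hk : k ≠ 0) :
    ‖poissonCoeff α r β k‖ = Real.exp (-α * (k : ℝ) ^ r) := by
  rw [poissonCoeff, if_neg hk, norm_mul, Complex.norm_exp_ofReal_mul_I, mul_one,
    Complex.norm_real, Real.norm_of_nonneg (Real.exp_pos _).le]

theorem summable_poissonCoeff (hα : 0 < α) (hr0 : 0 < r) : Summable (poissonCoeff α r β) := by
  refine Summable.of_norm_bounded (summable_exp_neg_mul_rpow hα hr0) fun k => ?_
  rcases eq_or_ne k 0 with rfl | hk
  · simpa [poissonCoeff] using (Real.exp_pos _).le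
  · exact (norm_poissonCoeff β hk).le

theorem genPoissonKernel_eq_trigSeries (hα : 0 < α) (hr0 : 0 < r) :
    genPoissonKernel α r β = trigSeries (poissonCoeff α r β) := by
  funext t
  rw [trigSeries, (hasSum_trigSeries (summable_poissonCoeff β hα hr0) t).summable.tsum_eq_zero_add]
  have hzero : trigHarmonic (poissonCoeff α r β 0) ((0 : ℕ) * t) = 0 := by
    simp [poissonCoeff, trigHarmonic]
  rw [hzero, zero_add, genPoissonKernel]
  refine tsum_congr fun k => ?_
  rw [trigHarmonic, poissonCoeff, if_neg k.succ_ne_zero, Complex.re_ofReal_mul,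
    Complex.im_ofReal_mul, Complex.exp_ofReal_mul_I_re, Complex.exp_ofReal_mul_I_im, Real.cos_sub]
  push_cast
  ring

theorem integral_trigSeries_indicator_poissonCoeff_sq (hα : 0 < α) (hr0 : 0 < r) {n : ℕ}
    (hn : n ≠ 0) :
    ∫ t in (-π)..π, trigSeries ((Set.Ici n).indicator (poissonCoeff α r β)) t ^ 2 =
      π * ∑' k : ℕ, Real.exp (-(2 * α) * ((k : ℝ) + n) ^ r) := by
  rw [integral_trigSeries_sq ((summable_poissonCoeff β hα hr0).indicator _) (by simp [hn]),
    ← (add_left_injective n).tsum_eq]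
  · congr 1
    refine tsum_congr fun k => ?_
    rw [Set.indicator_of_mem (Set.mem_Ici.2 (Nat.le_add_left n k)),
      norm_poissonCoeff β (by omega), ← Real.exp_nat_mul]
    push_cast
    ring_nf
  · refine fun k hk => ⟨k - n, Nat.sub_add_cancel ?_⟩
    by_contra hlt
    exact hk (by simp [hlt])

theorem genPoissonKernel_eq_re (hα : 0 < α) (hr0 : 0 < r) (t : ℝ) :
    genPoissonKernel α r β t =
      (Complex.exp ((-(β * π / 2) : ℝ) * Complex.I) * Complex.exp (t * Complex.I) *
        ∑' k : ℕ, (Real.exp (-α * ((k : ℝ) + 1) ^ r) : ℂ) *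
          Complex.exp (t * Complex.I) ^ k).re := by
  have hterm (k : ℕ) : Complex.exp ((-(β * π / 2) : ℝ) * Complex.I) *
      Complex.exp (t * Complex.I) * ((Real.exp (-α * ((k : ℝ) + 1) ^ r) : ℂ) *
        Complex.exp (t * Complex.I) ^ k) =
      Real.exp (-α * ((k : ℝ) + 1) ^ r) *
        Complex.exp (((((k : ℝ) + 1) * t - β * π / 2 : ℝ) : ℂ) * Complex.I) := by
    rw [mul_left_comm, ← Complex.exp_nat_mul, ← Complex.exp_add, ← Complex.exp_add]
    push_cast
    ring_nf
  have hsummable : Summable fun k : ℕ => (Real.exp (-α * ((k : ℝ) + 1) ^ r) : ℂ) *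
      Complex.exp (((((k : ℝ) + 1) * t - β * π / 2 : ℝ) : ℂ) * Complex.I) := by
    refine Summable.of_norm_bounded
      ((summable_nat_add_iff 1).2 (summable_exp_neg_mul_rpow hα hr0)) fun k => ?_
    rw [norm_mul, Complex.norm_exp_ofReal_mul_I, mul_one, Complex.norm_real,
      Real.norm_of_nonneg (Real.exp_pos _).le, Nat.cast_add_one]
  rw [← tsum_mul_left, tsum_congr hterm, Complex.re_tsum hsummable, genPoissonKernel]
  simp only [Complex.re_ofReal_mul, Complex.exp_ofReal_mul_I_re]

theorem analyticOnNhd_genPoissonKernel (hr0 : 0 < r) (hr1 : r < 1) (hα : 0 < α) :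
    AnalyticOnNhd ℝ (genPoissonKernel α r β) (Set.Ioo 0 (2 * π)) := by
  intro t ht
  have hsum : Summable fun k : ℕ => ‖(Real.exp (-α * ((k : ℝ) + 1) ^ r) : ℂ)‖ := by
    simpa only [Complex.norm_real, Real.norm_eq_abs, Real.abs_exp, Nat.cast_add_one] using
      (summable_nat_add_iff 1).2 (summable_exp_neg_mul_rpow hα hr0)
  have hseries := (hasMomentBound_exp_neg_mul_succ_rpow hr0 hr1 hα.le).analyticAt_tsum_mul_exp_pow
    hsum (exp_mul_I_ne_one_of_mem_Ioo ht)
  rw [funext (genPoissonKernel_eq_re β hα hr0)]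
  exact (Complex.reCLM.analyticAt _).comp
    ((analyticAt_const.mul (analyticAt_exp_ofReal_mul_I t)).mul hseries)

theorem ae_genPoissonKernel_sub_ne_zero (hr0 : 0 < r) (hr1 : r < 1) (hα : 0 < α) (x : ℝ) :
    ∀ᵐ t, genPoissonKernel α r β (x - t) ≠ 0 := by
  have hc := summable_poissonCoeff β hα hr0
  have hkernel := genPoissonKernel_eq_trigSeries β hα hr0
  have hne : ∃ t, genPoissonKernel α r β t ≠ 0 := by
    by_contra! hzero
    have hcoeff := eq_zero_of_trigSeries_eq_zero hc (hkernel ▸ hzero) one_ne_zero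
    have hnorm := norm_poissonCoeff (α := α) (r := r) β one_ne_zero
    rw [hcoeff, norm_zero] at hnorm
    exact (Real.exp_pos _).ne hnorm
  exact (Measure.measurePreserving_sub_left volume x).quasiMeasurePreserving.ae
    (ae_ne_zero_of_periodic_of_analyticOnNhd Real.two_pi_pos
      (hkernel ▸ periodic_trigSeries _) (hkernel ▸ continuous_trigSeries hc)
      (analyticOnNhd_genPoissonKernel β hr0 hr1 hα) hne)

/-- `eLpNorm φ 2` is an upper integral, so the class contains functions with non-measurable `φ`; the
integrals defining them take the junk value `0`. -/
theorem integral_genPoissonKernel_sub_mul_of_not_aestronglyMeasurable (hr0 : 0 < r) (hr1 : r < 1)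
    (hα : 0 < α) {φ : ℝ → ℝ} (hφper : Function.Periodic φ (2 * π))
    (hφ : ¬ AEStronglyMeasurable φ (volume.restrict (Set.Ioc 0 (2 * π)))) (x : ℝ) :
    ∫ t in (-π)..π, genPoissonKernel α r β (x - t) * φ t = 0 := by
  have hkernel := genPoissonKernel_eq_trigSeries β hα hr0
  have hcont : Continuous fun t => genPoissonKernel α r β (x - t) :=
    hkernel ▸ (continuous_trigSeries (summable_poissonCoeff β hα hr0)).comp (continuous_sub_left x)
  have hper : Function.Periodic (fun t => genPoissonKernel α r β (x - t) * φ t) (2 * π) :=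
    hkernel ▸ ((periodic_trigSeries _).const_sub x).mul hφper
  rw [integral_neg_pi_pi_of_periodic hper, intervalIntegral.integral_of_le Real.two_pi_pos.le]
  refine integral_undef fun hintegrable => hφ (aestronglyMeasurable_of_mul
    hcont.aestronglyMeasurable (ae_restrict_of_ae (ae_genPoissonKernel_sub_ne_zero β hr0 hr1 hα x))
    hintegrable.1)

end Kernel

section ExactDeviation

variable {α r β : ℝ} {n : ℕ}

theorem one_div_pi_mul_sqrt_pi_mul (T : ℝ) : 1 / π * √(π * T) = √(T / π) := by
  rw [Real.sqrt_mul Real.pi_pos.le, Real.sqrt_div' _ Real.pi_pos.le]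
  have hsq := Real.sq_sqrt Real.pi_pos.le
  field_simp
  rw [hsq]

theorem intervalIntegrable_of_eLpNorm_two_le_one {φ : ℝ → ℝ}
    (hφper : Function.Periodic φ (2 * π))
    (hφ : AEStronglyMeasurable φ (volume.restrict (Set.Ioc 0 (2 * π))))
    (hφ1 : eLpNorm φ 2 (volume.restrict (Set.Ioc 0 (2 * π))) ≤ 1) (a b : ℝ) :
    IntervalIntegrable φ volume a b := by
  have hmem : MemLp φ 2 (volume.restrict (Set.Ioc 0 (2 * π))) :=
    ⟨hφ, hφ1.trans_lt ENNReal.one_lt_top⟩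
  have hperiod : IntervalIntegrable φ volume 0 (2 * π) :=
    (intervalIntegrable_iff_integrableOn_Ioc_of_le Real.two_pi_pos.le).2
      (hmem.integrable one_le_two)
  exact hφper.intervalIntegrable₀ Real.two_pi_pos.ne' hperiod a b

theorem abs_sub_fourierSum_le_of_mem_poissonClass (hr0 : 0 < r) (hr1 : r < 1) (hα : 0 < α)
    (hn : n ≠ 0) {f : ℝ → ℝ} (hf : f ∈ poissonClass α r β 2) (x : ℝ) :
    |f x - fourierSum (n - 1) f x| ≤
      √((∑' k : ℕ, Real.exp (-(2 * α) * ((k : ℝ) + n) ^ r)) / π) := by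
  obtain ⟨-, a₀, φ, hφper, hφ1, -, hf⟩ := hf
  have hc := summable_poissonCoeff β hα hr0
  by_cases hφ : AEStronglyMeasurable φ (volume.restrict (Set.Ioc 0 (2 * π)))
  · rw [genPoissonKernel_eq_trigSeries β hα hr0] at hf
    have hintegrable := intervalIntegrable_of_eLpNorm_two_le_one hφper hφ hφ1 (-π) π
    rw [sub_fourierSum_of_eq_add_integral hc hintegrable hf hn, abs_mul,
      abs_of_pos (one_div_pos.2 Real.pi_pos), ← one_div_pi_mul_sqrt_pi_mul,
      ← integral_trigSeries_indicator_poissonCoeff_sq β hα hr0 hn]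
    gcongr
    exact abs_integral_trigSeries_sub_mul_le (hc.indicator _) hφper hφ hφ1 x
  · have hconst (y : ℝ) : f y = a₀ / 2 +
        1 / π * ∫ t in (-π)..π, trigSeries (poissonCoeff α r β) (y - t) * 0 := by
      rw [hf, integral_genPoissonKernel_sub_mul_of_not_aestronglyMeasurable β hr0 hr1 hα hφper hφ]
      simp
    rw [sub_fourierSum_of_eq_add_integral hc intervalIntegrable_const hconst hn]
    simp

theorem exists_mem_poissonClass_sub_fourierSum_eq (hr0 : 0 < r) (hα : 0 < α) (hn : n ≠ 0) :
    ∃ f ∈ poissonClass α r β 2, f 0 - fourierSum (n - 1) f 0 =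
      √((∑' k : ℕ, Real.exp (-(2 * α) * ((k : ℝ) + n) ^ r)) / π) := by
  have hc := summable_poissonCoeff β hα hr0
  have hkernel := genPoissonKernel_eq_trigSeries β hα hr0
  obtain ⟨φ, hφcont, hφper, hφ1, hφ0, hattained⟩ := exists_integral_trigSeries_neg_mul_eq
    (c := (Set.Ici n).indicator (poissonCoeff α r β)) (hc.indicator _) (by simp [hn])
  set f : ℝ → ℝ := fun x =>
    0 / 2 + 1 / π * ∫ t in (-π)..π, genPoissonKernel α r β (x - t) * φ t with hf
  refine ⟨f, ⟨fun x => ?_, 0, φ, hφper, hφ1, hφ0, fun x => rfl⟩, ?_⟩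
  · simp only [hf, hkernel, add_sub_right_comm x, periodic_trigSeries _ _]
  · have hrep (x : ℝ) : f x =
        0 / 2 + 1 / π * ∫ t in (-π)..π, trigSeries (poissonCoeff α r β) (x - t) * φ t := by
      rw [← hkernel]
    rw [sub_fourierSum_of_eq_add_integral hc (hφcont.intervalIntegrable _ _) hrep hn]
    simp only [zero_sub]
    rw [hattained, integral_trigSeries_indicator_poissonCoeff_sq β hα hr0 hn,
      one_div_pi_mul_sqrt_pi_mul]

theorem EnC_two_eq_sqrt_tsum (hr0 : 0 < r) (hr1 : r < 1) (hα : 0 < α) (hn : n ≠ 0) :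
    EnC α r β 2 n = √((∑' k : ℕ, Real.exp (-(2 * α) * ((k : ℝ) + n) ^ r)) / π) := by
  set E := √((∑' k : ℕ, Real.exp (-(2 * α) * ((k : ℝ) + n) ^ r)) / π)
  have hdev (f) (hf : f ∈ poissonClass α r β 2) (x : ℝ) :
      |f x - fourierSum (n - 1) f x| ≤ E :=
    abs_sub_fourierSum_le_of_mem_poissonClass hr0 hr1 hα hn hf x
  have hsup (f : ℝ → ℝ) :
      ⨆ _ : f ∈ poissonClass α r β 2, ⨆ x, |f x - fourierSum (n - 1) f x| ≤ E :=
    Real.iSup_le (fun hf => Real.iSup_le (hdev f hf) (Real.sqrt_nonneg _)) (Real.sqrt_nonneg _)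
  refine le_antisymm (Real.iSup_le hsup (Real.sqrt_nonneg _)) ?_
  obtain ⟨f, hf, hattained⟩ :=
    exists_mem_poissonClass_sub_fourierSum_eq (β := β) hr0 hα hn
  calc E = f 0 - fourierSum (n - 1) f 0 := hattained.symm
    _ ≤ |f 0 - fourierSum (n - 1) f 0| := le_abs_self _
    _ ≤ ⨆ x, |f x - fourierSum (n - 1) f x| :=
        le_ciSup (f := fun x => |f x - fourierSum (n - 1) f x|)
          ⟨E, Set.forall_mem_range.2 (hdev f hf)⟩ 0
    _ = ⨆ _ : f ∈ poissonClass α r β 2, ⨆ x, |f x - fourierSum (n - 1) f x| :=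
        (ciSup_pos (f := fun _ => ⨆ x, |f x - fourierSum (n - 1) f x|) hf).symm
    _ ≤ EnC α r β 2 n := le_ciSup (f := fun f : ℝ → ℝ =>
        ⨆ _ : f ∈ poissonClass α r β 2, ⨆ x, |f x - fourierSum (n - 1) f x|)
          ⟨E, Set.forall_mem_range.2 hsup⟩ f

end ExactDeviation

/-! ### Asymptotics of the tail sum -/

/-- The leading term `e^{-A x^r} x^{1-r} / (A r)` of the tail `∫_x^∞ e^{-A t^r} dt`; it arises by
integrating by parts once. -/
noncomputable def tailLeadingTerm (A r x : ℝ) : ℝ :=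
  Real.exp (-A * x ^ r) * x ^ (1 - r) / (A * r)

section Tail

variable {A r : ℝ}

theorem tailLeadingTerm_pos (hA : 0 < A) (hr0 : 0 < r) {x : ℝ} (hx : 0 < x) :
    0 < tailLeadingTerm A r x := by
  unfold tailLeadingTerm
  positivity

theorem hasDerivAt_tailLeadingTerm (hA : 0 < A) (hr0 : 0 < r) {x : ℝ} (hx : 0 < x) :
    HasDerivAt (tailLeadingTerm A r)
      (-(Real.exp (-A * x ^ r) * (1 - (1 - r) * x ^ (-r) / (A * r)))) x := by
  have hderiv := (((Real.hasDerivAt_rpow_const (p := r) (.inl hx.ne')).const_mul (-A)).exp.mul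
    (Real.hasDerivAt_rpow_const (p := 1 - r) (.inl hx.ne'))).div_const (A * r)
  refine hderiv.congr_deriv ?_
  have hcancel : x ^ (r - 1) * x ^ (1 - r) = 1 := by
    rw [← Real.rpow_add hx, sub_add_sub_cancel, sub_self, Real.rpow_zero]
  rw [show 1 - r - 1 = -r by ring]
  field_simp
  linear_combination (-A * r) * hcancel

theorem exists_tailLeadingTerm_sub_eq (hA : 0 < A) (hr0 : 0 < r) {x : ℝ} (hx : 0 < x) :
    ∃ c ∈ Set.Ioo x (x + 1), tailLeadingTerm A r x - tailLeadingTerm A r (x + 1) =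
      Real.exp (-A * c ^ r) * (1 - (1 - r) * c ^ (-r) / (A * r)) := by
  obtain ⟨c, hc, hslope⟩ := exists_hasDerivAt_eq_slope (tailLeadingTerm A r) _ (lt_add_one x)
    (fun y hy => (hasDerivAt_tailLeadingTerm hA hr0
      (hx.trans_le hy.1)).continuousAt.continuousWithinAt)
    (fun y hy => hasDerivAt_tailLeadingTerm hA hr0 (hx.trans hy.1))
  rw [add_sub_cancel_left, div_one] at hslope
  exact ⟨c, hc, by linarith⟩

theorem exp_neg_mul_rpow_anti (hA : 0 ≤ A) (hr0 : 0 ≤ r) {x y : ℝ} (hx : 0 ≤ x) (hxy : x ≤ y) :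
    Real.exp (-A * y ^ r) ≤ Real.exp (-A * x ^ r) :=
  Real.exp_le_exp.2 (mul_le_mul_of_nonpos_left (Real.rpow_le_rpow hx hxy hr0) (neg_nonpos.2 hA))

theorem tailLeadingTerm_sub_le (hA : 0 < A) (hr0 : 0 < r) (hr1 : r ≤ 1) {x : ℝ} (hx : 0 < x) :
    tailLeadingTerm A r x - tailLeadingTerm A r (x + 1) ≤ Real.exp (-A * x ^ r) := by
  obtain ⟨c, hc, heq⟩ := exists_tailLeadingTerm_sub_eq hA hr0 hx
  have hcorr : 0 ≤ (1 - r) * c ^ (-r) / (A * r) :=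
    div_nonneg (mul_nonneg (sub_nonneg.2 hr1) (Real.rpow_nonneg (hx.trans hc.1).le _))
      (mul_pos hA hr0).le
  rw [heq]
  exact (mul_le_of_le_one_right (Real.exp_pos _).le (sub_le_self _ hcorr)).trans
    (exp_neg_mul_rpow_anti hA.le hr0.le hx.le hc.1.le)

theorem mul_exp_le_tailLeadingTerm_sub (hA : 0 < A) (hr0 : 0 < r) {x u : ℝ} (hx : 0 < x)
    (hu : x ^ (-r) / (A * r) ≤ u) (hu1 : u ≤ 1) :
    (1 - u) * Real.exp (-A * (x + 1) ^ r) ≤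
      tailLeadingTerm A r x - tailLeadingTerm A r (x + 1) := by
  obtain ⟨c, hc, heq⟩ := exists_tailLeadingTerm_sub_eq hA hr0 hx
  have hc0 : 0 < c := hx.trans hc.1
  have hcorr : (1 - r) * c ^ (-r) / (A * r) ≤ u :=
    calc (1 - r) * c ^ (-r) / (A * r) ≤ c ^ (-r) / (A * r) := by
          gcongr
          exact mul_le_of_le_one_left (Real.rpow_nonneg hc0.le _) (by linarith)
      _ ≤ x ^ (-r) / (A * r) := by
          gcongr ?_ / _
          exact Real.rpow_le_rpow_of_nonpos hx hc.1.le (by linarith)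
      _ ≤ u := hu
  calc (1 - u) * Real.exp (-A * (x + 1) ^ r) ≤ (1 - u) * Real.exp (-A * c ^ r) :=
        mul_le_mul_of_nonneg_left (exp_neg_mul_rpow_anti hA.le hr0.le hc0.le hc.2.le)
          (sub_nonneg.2 hu1)
    _ ≤ Real.exp (-A * c ^ r) * (1 - (1 - r) * c ^ (-r) / (A * r)) := by
        rw [mul_comm]
        gcongr
    _ = _ := heq.symm

theorem tendsto_tailLeadingTerm_atTop (hA : 0 < A) (hr0 : 0 < r) :
    Tendsto (tailLeadingTerm A r) atTop (nhds 0) := by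
  have hlim := ((tendsto_rpow_mul_exp_neg_mul_atTop_nhds_zero ((1 - r) / r) A hA).comp
    (tendsto_rpow_atTop hr0)).div_const (A * r)
  rw [zero_div] at hlim
  refine hlim.congr' ?_
  filter_upwards [eventually_gt_atTop 0] with x hx
  simp only [Function.comp_apply, tailLeadingTerm]
  rw [← Real.rpow_mul hx.le, mul_div_cancel₀ _ hr0.ne', mul_comm]

theorem sum_range_tailLeadingTerm_sub (A r x : ℝ) (N : ℕ) :
    ∑ k ∈ Finset.range N, (tailLeadingTerm A r (k + x) - tailLeadingTerm A r (k + x + 1)) =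
      tailLeadingTerm A r x - tailLeadingTerm A r (N + x) := by
  simpa [add_right_comm] using
    Finset.sum_range_sub' (fun k : ℕ => tailLeadingTerm A r (k + x)) N

variable {n : ℕ}

theorem summable_exp_neg_mul_add_rpow (hA : 0 < A) (hr0 : 0 < r) (n : ℕ) :
    Summable fun k : ℕ => Real.exp (-A * ((k : ℝ) + n) ^ r) := by
  simpa only [Nat.cast_add] using (summable_nat_add_iff n).2 (summable_exp_neg_mul_rpow hA hr0)

theorem tailLeadingTerm_le_tsum (hA : 0 < A) (hr0 : 0 < r) (hr1 : r ≤ 1) (hn : n ≠ 0) :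
    tailLeadingTerm A r n ≤ ∑' k : ℕ, Real.exp (-A * ((k : ℝ) + n) ^ r) := by
  have hn' : (0 : ℝ) < n := Nat.cast_pos.2 (Nat.pos_of_ne_zero hn)
  have hlim : Tendsto (fun N : ℕ => tailLeadingTerm A r n - tailLeadingTerm A r (N + n)) atTop
      (nhds (tailLeadingTerm A r n - 0)) :=
    tendsto_const_nhds.sub ((tendsto_tailLeadingTerm_atTop hA hr0).comp
      (tendsto_atTop_add_const_right _ _ tendsto_natCast_atTop_atTop))
  rw [sub_zero] at hlim
  refine le_of_tendsto' hlim fun N => ?_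
  rw [← sum_range_tailLeadingTerm_sub]
  exact (Finset.sum_le_sum fun k _ => tailLeadingTerm_sub_le hA hr0 hr1
      (add_pos_of_nonneg_of_pos k.cast_nonneg hn')).trans
    ((summable_exp_neg_mul_add_rpow hA hr0 n).sum_le_tsum _ fun k _ => (Real.exp_pos _).le)

theorem tsum_le_tailLeadingTerm_div_add (hA : 0 < A) (hr0 : 0 < r) (hn : n ≠ 0) {u : ℝ}
    (hu : (n : ℝ) ^ (-r) / (A * r) ≤ u) (hu1 : u < 1) :
    ∑' k : ℕ, Real.exp (-A * ((k : ℝ) + n) ^ r) ≤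
      tailLeadingTerm A r n / (1 - u) + Real.exp (-A * (n : ℝ) ^ r) := by
  have hn' : (0 : ℝ) < n := Nat.cast_pos.2 (Nat.pos_of_ne_zero hn)
  have hstep (k : ℕ) : (1 - u) * Real.exp (-A * (((k + 1 : ℕ) : ℝ) + n) ^ r) ≤
      tailLeadingTerm A r (k + n) - tailLeadingTerm A r (k + n + 1) := by
    rw [Nat.cast_add_one, add_right_comm]
    refine mul_exp_le_tailLeadingTerm_sub hA hr0 (by positivity) (le_trans ?_ hu) hu1.le
    gcongr ?_ / _
    exact Real.rpow_le_rpow_of_nonpos hn' (le_add_of_nonneg_left k.cast_nonneg) (by linarith)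
  rw [(summable_exp_neg_mul_add_rpow hA hr0 n).tsum_eq_zero_add, Nat.cast_zero, zero_add, add_comm]
  gcongr
  refine Real.tsum_le_of_sum_range_le (fun k => (Real.exp_pos _).le) fun N => ?_
  rw [le_div_iff₀ (sub_pos.2 hu1), mul_comm, Finset.mul_sum]
  calc _ ≤ tailLeadingTerm A r n - tailLeadingTerm A r (N + n) :=
        (Finset.sum_le_sum fun k _ => hstep k).trans_eq (sum_range_tailLeadingTerm_sub A r n N)
    _ ≤ tailLeadingTerm A r n :=
        sub_le_self _ (tailLeadingTerm_pos hA hr0 (by positivity)).le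

end Tail

section Asymptotics

variable {α r : ℝ} {n : ℕ}

theorem sqrt_tailLeadingTerm_two_mul_div_pi (α r : ℝ) {x : ℝ} (hx : 0 ≤ x) :
    √(tailLeadingTerm (2 * α) r x / π) =
      Real.exp (-α * x ^ r) / √(2 * π * α * r) * x ^ ((1 - r) / 2) := by
  have hexp : Real.exp (-(2 * α) * x ^ r) = Real.exp (-α * x ^ r) ^ 2 := by
    rw [← Real.exp_nat_mul]
    push_cast
    ring_nf
  have hpow : x ^ (1 - r) = (x ^ ((1 - r) / 2)) ^ 2 := by
    rw [← Real.rpow_mul_natCast hx, Nat.cast_ofNat, div_mul_cancel₀ _ two_ne_zero]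
  have hsplit : tailLeadingTerm (2 * α) r x / π =
      (Real.exp (-α * x ^ r) * x ^ ((1 - r) / 2)) ^ 2 / (2 * π * α * r) := by
    rw [tailLeadingTerm, hexp, hpow, div_div]
    ring_nf
  rw [hsplit, Real.sqrt_div (sq_nonneg _), Real.sqrt_sq (by positivity), div_mul_eq_mul_div]

theorem ne_zero_of_one_le_mul_rpow (hr0 : 0 < r) (hn : 1 ≤ α * r * (n : ℝ) ^ r) : n ≠ 0 := by
  rintro rfl
  norm_num [Real.zero_rpow hr0.ne'] at hn

theorem exp_neg_mul_rpow_eq_tailLeadingTerm_mul {A x : ℝ} (hA : A ≠ 0) (hr : r ≠ 0)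
    (hx : 0 < x) :
    Real.exp (-A * x ^ r) = tailLeadingTerm A r x * (A * r * x ^ (-(1 - r))) := by
  have hcancel : x ^ (1 - r) * x ^ (-(1 - r)) = 1 := by
    rw [← Real.rpow_add hx, add_neg_cancel, Real.rpow_zero]
  rw [tailLeadingTerm]
  field_simp
  rw [hcancel]

theorem tsum_le_tailLeadingTerm_mul_sq (hr0 : 0 < r) (hα : 0 < α)
    (hn : 1 ≤ α * r * (n : ℝ) ^ r) :
    ∑' k : ℕ, Real.exp (-(2 * α) * ((k : ℝ) + n) ^ r) ≤ tailLeadingTerm (2 * α) r n *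
      (1 + (1 / (2 * α * r) * (n : ℝ) ^ (-r) + α * r * (n : ℝ) ^ (-(1 - r)))) ^ 2 := by
  have hn0 := ne_zero_of_one_le_mul_rpow hr0 hn
  have hn' : (0 : ℝ) < n := Nat.cast_pos.2 (Nat.pos_of_ne_zero hn0)
  have h2α : 0 < 2 * α := by positivity
  set u := 1 / (2 * α * r) * (n : ℝ) ^ (-r) with hu
  set v := α * r * (n : ℝ) ^ (-(1 - r)) with hv
  set M := tailLeadingTerm (2 * α) r n
  have hM : 0 < M := tailLeadingTerm_pos h2α hr0 hn'
  have hu0 : 0 < u := by positivity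
  have hu_half : u ≤ 1 / 2 := by
    rw [hu, Real.rpow_neg hn'.le]
    field_simp
    exact hn
  have hfirst : Real.exp (-(2 * α) * (n : ℝ) ^ r) = M * (2 * v) := by
    rw [exp_neg_mul_rpow_eq_tailLeadingTerm_mul h2α.ne' hr0.ne' hn', hv]
    ring
  have hdiv : M / (1 - u) ≤ M * (1 + 2 * u) := by
    rw [div_le_iff₀ (by linarith)]
    nlinarith [mul_pos hM hu0]
  calc ∑' k : ℕ, Real.exp (-(2 * α) * ((k : ℝ) + n) ^ r)
      ≤ M / (1 - u) + Real.exp (-(2 * α) * (n : ℝ) ^ r) :=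
        tsum_le_tailLeadingTerm_div_add h2α hr0 hn0 (by rw [hu, one_div_mul_eq_div])
          (by linarith)
    _ ≤ M * (1 + 2 * (u + v)) := by linarith
    _ ≤ M * (1 + (u + v)) ^ 2 := by
        gcongr
        linarith [sq_nonneg (u + v), add_sq 1 (u + v)]

theorem exists_mem_Icc_eq_mul_one_add_mul {D E w : ℝ} (hD : 0 < D) (hw : 0 < w) (hDE : D ≤ E)
    (hE : E ≤ D * (1 + w)) : ∃ γ ∈ Set.Icc (0 : ℝ) 1, E = D * (1 + γ * w) := by
  refine ⟨(E / D - 1) / w, ⟨?_, ?_⟩, ?_⟩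
  · exact div_nonneg (sub_nonneg.2 ((one_le_div hD).2 hDE)) hw.le
  · rwa [div_le_one hw, sub_le_iff_le_add', div_le_iff₀' hD]
  · field_simp
    ring

theorem statement4_general (α r β : ℝ) (hr0 : 0 < r) (hr1 : r < 1) (hα : 0 < α) {n : ℕ}
    (hn : 1 ≤ α * r * (n : ℝ) ^ r) :
    ∃ γ ∈ Set.Icc (0 : ℝ) 1, EnC α r β 2 n =
      Real.exp (-α * (n : ℝ) ^ r) / √(2 * π * α * r) * (n : ℝ) ^ ((1 - r) / 2) *
        (1 + γ * (1 / (2 * α * r) * (n : ℝ) ^ (-r) + α * r * (n : ℝ) ^ (-(1 - r)))) := by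
  have hn0 := ne_zero_of_one_le_mul_rpow hr0 hn
  have hn' : (0 : ℝ) < n := Nat.cast_pos.2 (Nat.pos_of_ne_zero hn0)
  rw [EnC_two_eq_sqrt_tsum hr0 hr1 hα hn0]
  have hw : 0 < 1 / (2 * α * r) * (n : ℝ) ^ (-r) + α * r * (n : ℝ) ^ (-(1 - r)) := by positivity
  refine exists_mem_Icc_eq_mul_one_add_mul (by positivity) hw ?_ ?_
  · rw [← sqrt_tailLeadingTerm_two_mul_div_pi α r hn'.le]
    gcongr
    exact tailLeadingTerm_le_tsum (by positivity) hr0 hr1.le hn0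
  · rw [← sqrt_tailLeadingTerm_two_mul_div_pi α r hn'.le,
      ← Real.sqrt_sq (add_nonneg zero_le_one hw.le), ← Real.sqrt_mul' _ (sq_nonneg _),
      div_mul_eq_mul_div]
    gcongr
    exact tsum_le_tailLeadingTerm_mul_sq hr0 hα hn

theorem one_le_mul_rpow_of_n₀two_le (hr0 : 0 < r) (hr1 : r < 1) (hα : 0 < α)
    (hn : n₀two α r ≤ n) : 1 ≤ α * r * (n : ℝ) ^ r := by
  have hlim : Tendsto (fun m : ℕ => 1 / (α * r) * (m : ℝ) ^ (-r) +
      2 * α * r * (m : ℝ) ^ (-(1 - r))) atTop (nhds 0) := by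
    simpa using
      (((tendsto_rpow_neg_atTop hr0).comp tendsto_natCast_atTop_atTop).const_mul _).add
        (((tendsto_rpow_neg_atTop (sub_pos.2 hr1)).comp tendsto_natCast_atTop_atTop).const_mul _)
  have hthreshold : 0 < 1 / (3 * π) ^ 3 * (1 / 2) := by positivity
  have hattained : n₀two α r ∈ _ := Nat.sInf_mem
    (((eventually_gt_atTop 0).and (hlim.eventually_le_const hthreshold)).exists)
  obtain ⟨hpos, hle⟩ := hattained
  have hpos' : (0 : ℝ) < n₀two α r := Nat.cast_pos.2 hpos
  have hthreshold1 : 1 / (3 * π) ^ 3 * (1 / 2) ≤ 1 :=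
    mul_le_one₀ (div_le_one_of_le₀ (one_le_pow₀ (by linarith [Real.pi_gt_three])) (by positivity))
      (by norm_num) (by norm_num)
  have hfirst : 1 / (α * r) * (n₀two α r : ℝ) ^ (-r) ≤ 1 :=
    (le_add_of_nonneg_right (by positivity)).trans (hle.trans hthreshold1)
  rw [Real.rpow_neg hpos'.le, one_div_mul_eq_div, ← one_div, div_div,
    div_le_one (by positivity)] at hfirst
  calc 1 ≤ (n₀two α r : ℝ) ^ r * (α * r) := hfirst
    _ = α * r * (n₀two α r : ℝ) ^ r := mul_comm _ _
    _ ≤ α * r * (n : ℝ) ^ r := by gcongr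

theorem one_le_sqrt_div_sub_one {x : ℝ} (hx : 1 < x) : 1 ≤ √(x / (x - 1)) :=
  Real.one_le_sqrt.2 ((one_le_div (sub_pos.2 hx)).2 (sub_le_self x zero_le_one))

end Asymptotics

theorem statement4 (α r β : ℝ)
    (hr0 : 0 < r) (hr1 : r < 1) (hα : 0 < α) :
    ∀ n : ℕ, n₀two α r ≤ n →
      ∃ γ : ℝ, |γ| ≤ Real.sqrt (54 * π ^ 3 / (54 * π ^ 3 - 1)) ∧
        EnC α r β 2 n =
          Real.exp (-α * (n : ℝ) ^ r) / Real.sqrt (2 * π * α * r) * (n : ℝ) ^ ((1 - r) / 2) *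
            (1 + γ * (1 / (2 * α * r) * (n : ℝ) ^ (-r) +
              α * r * (n : ℝ) ^ (-(1 - r)))) := by
  intro n hn
  obtain ⟨γ, ⟨hγ0, hγ1⟩, hE⟩ :=
    statement4_general α r β hr0 hr1 hα (one_le_mul_rpow_of_n₀two_le hr0 hr1 hα hn)
  have hπ : 1 < 54 * π ^ 3 := by linarith [one_le_pow₀ (n := 3) (by linarith [pi_gt_three] : 1 ≤ π)]
  exact ⟨γ, (abs_of_nonneg hγ0).trans_le (hγ1.trans (one_le_sqrt_div_sub_one hπ)), hE⟩
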